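/- arXiv:2412.20809 — 2 statements merged into one kernel-verified Lean document; each statement's English description precedes it below -/
import Mathlib

section
/- Let N ≥ 7 and m ≥ 1 with 2m < ⌊N/2⌋. The map λ ↦ λ' (erasing the first column of the Young diagram) is a bijection from the set A_m = {orthogonal partitions λ of N with λ₁ ≥ 3 and N − p(λ) = 2m} onto the set of symplectic partitions ν of 2m with ν₁ ≥ 2, and for all λ, μ ∈ A_m one has λ ⊴ μ in the dominance order if and only if λ' ⊴ μ'. (Hence the subposet Υ_m of nilpotent SO_N-orbits is isomorphic, as a poset under closure order, to the poset of nonzero nilpotent orbits of sp_{2m}.) -/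
noncomputable section

/-- A partition of `n`, represented as an antitone function `ℕ → ℕ` (the parts in weakly
decreasing order, padded by zeros), vanishing from index `n` on and summing to `n`. -/
def IsPartitionOf (n : ℕ) (f : ℕ → ℕ) : Prop :=
  Antitone f ∧ f n = 0 ∧ ∑ i ∈ Finset.range n, f i = n

/-- The number of (nonzero) parts of a partition of `n`. -/
def numParts (n : ℕ) (f : ℕ → ℕ) : ℕ :=
  ((Finset.range n).filter (fun i => f i ≠ 0)).card

/-- The multiplicity of `m` as a part of a partition of `n`. -/
def multPart (n : ℕ) (f : ℕ → ℕ) (m : ℕ) : ℕ :=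
  ((Finset.range n).filter (fun i => f i = m)).card

/-- A symplectic partition of `n`: every odd part occurs with even multiplicity. -/
def SymplecticPartition (n : ℕ) (f : ℕ → ℕ) : Prop :=
  IsPartitionOf n f ∧ ∀ m : ℕ, Odd m → Even (multPart n f m)

/-- An orthogonal partition of `n`: every (nonzero) even part occurs with even
multiplicity. -/
def OrthogonalPartition (n : ℕ) (f : ℕ → ℕ) : Prop :=
  IsPartitionOf n f ∧ ∀ m : ℕ, 0 < m → Even m → Even (multPart n f m)

/-- The dominance order on partitions. -/
def Dominates (f g : ℕ → ℕ) : Prop :=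
  ∀ m : ℕ, ∑ i ∈ Finset.range m, f i ≤ ∑ i ∈ Finset.range m, g i

/-- Erasing the first column of the Young diagram. -/
def eraseCol (f : ℕ → ℕ) : ℕ → ℕ := fun i => f i - 1

/-!
Write `λ ⊢ n + p` with exactly `p` parts as a first column of length `p` glued to its erasure
`ν ⊢ n`, which has at most `p` parts. Erasing lowers every part by one, so for `k > 0` the
multiplicity of `k + 1` in `λ` is that of `k` in `ν`, and the orthogonality condition on `λ` is
the symplectic condition on `ν`. The glued column adds the same amount `min k p` to the `k`-th
partial sum of every such partition, so dominance is unaffected. If `n ≤ p`, the bound on the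
number of parts of `ν` is automatic.
-/

/-- Gluing a column of length `p` to the left of a Young diagram; this is inverse to `eraseCol`
on diagrams with at most `p` rows, and is meant for those only. -/
def addCol (p : ℕ) (g : ℕ → ℕ) : ℕ → ℕ := fun i => g i + if i < p then 1 else 0

section

variable {N n p k : ℕ} {f g : ℕ → ℕ}

theorem numParts_le (n : ℕ) (f : ℕ → ℕ) : numParts n f ≤ n :=
  (Finset.card_filter_le _ _).trans_eq (Finset.card_range n)

theorem numParts_eq_of_ne_zero_iff (hp : p ≤ n) (h : ∀ i, f i ≠ 0 ↔ i < p) :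
    numParts n f = p := by
  have hfilter : (Finset.range n).filter (fun i => f i ≠ 0) = Finset.range p := by
    ext i
    simp only [Finset.mem_filter, Finset.mem_range, h]
    omega
  rw [numParts, hfilter, Finset.card_range]

theorem IsPartitionOf.ne_zero_iff (hf : IsPartitionOf n f) (i : ℕ) :
    f i ≠ 0 ↔ i < numParts n f := by
  obtain ⟨hanti, hz, -⟩ := hf
  have hex : ∃ j, f j = 0 := ⟨n, hz⟩
  have hfind : ∀ j, f j ≠ 0 ↔ j < Nat.find hex := fun j =>
    ⟨fun hj => lt_of_not_ge fun hle => hj (Nat.le_zero.1 (Nat.find_spec hex ▸ hanti hle)),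
      Nat.find_min hex⟩
  rw [numParts_eq_of_ne_zero_iff (Nat.find_min' hex hz) hfind, hfind]

theorem isPartitionOf_iff_of_le (h : n ≤ N) :
    IsPartitionOf n f ↔ Antitone f ∧ f N = 0 ∧ ∑ i ∈ Finset.range N, f i = n := by
  have hsum : Antitone f → f n = 0 →
      ∑ i ∈ Finset.range N, f i = ∑ i ∈ Finset.range n, f i := fun hanti hz =>
    Finset.eventually_constant_sum (fun i hi => Nat.le_zero.1 (hz ▸ hanti hi)) h
  refine ⟨fun ⟨hanti, hz, hn⟩ => ⟨hanti, Nat.le_zero.1 (hz ▸ hanti h), (hsum hanti hz).trans hn⟩,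
    fun ⟨hanti, hz, hN⟩ => ?_⟩
  have hzero : f n = 0 := by
    rcases h.eq_or_lt with rfl | hlt
    · exact hz
    have hmul : (n + 1) * f n ≤ n := calc
      (n + 1) * f n ≤ ∑ i ∈ Finset.range (n + 1), f i := by
        simpa using Finset.card_nsmul_le_sum (Finset.range (n + 1)) f (f n)
          fun i hi => hanti (Finset.mem_range_succ_iff.1 hi)
      _ ≤ ∑ i ∈ Finset.range N, f i :=
        Finset.sum_le_sum_of_subset (Finset.range_subset_range.2 hlt)
      _ = n := hN
    by_contra hne
    exact (Nat.le_mul_of_pos_right (n + 1) (Nat.pos_of_ne_zero hne)).not_gt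
      (Nat.lt_succ_of_le hmul)
  exact ⟨hanti, hzero, (hsum hanti hzero).symm.trans hN⟩

theorem IsPartitionOf.addCol_eraseCol (hf : IsPartitionOf n f) :
    addCol (numParts n f) (eraseCol f) = f := by
  funext i
  have := hf.ne_zero_iff i
  simp only [addCol, eraseCol]
  split_ifs <;> omega

theorem IsPartitionOf.eraseCol_addCol (hg : IsPartitionOf n g) (hp : numParts n g ≤ p) :
    eraseCol (addCol p g) = g := by
  funext i
  have := hg.ne_zero_iff i
  simp only [addCol, eraseCol]
  split_ifs <;> omega

theorem sum_range_addCol (p : ℕ) (g : ℕ → ℕ) (k : ℕ) :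
    ∑ i ∈ Finset.range k, addCol p g i = ∑ i ∈ Finset.range k, g i + min k p := by
  have hfilter : (Finset.range k).filter (· < p) = Finset.range (min k p) := by
    ext i
    simp only [Finset.mem_filter, Finset.mem_range, lt_min_iff]
  simp only [addCol, Finset.sum_add_distrib, Finset.sum_boole, hfilter, Finset.card_range,
    Nat.cast_id]

theorem dominates_addCol_iff : Dominates (addCol p f) (addCol p g) ↔ Dominates f g := by
  simp only [Dominates, sum_range_addCol, add_le_add_iff_right]

theorem IsPartitionOf.dominates_eraseCol_iff (hf : IsPartitionOf n f) (hg : IsPartitionOf N g)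
    (h : numParts n f = numParts N g) :
    Dominates (eraseCol f) (eraseCol g) ↔ Dominates f g := by
  rw [← dominates_addCol_iff (p := numParts n f), hf.addCol_eraseCol, h, hg.addCol_eraseCol]

theorem IsPartitionOf.isPartitionOf_addCol (hg : IsPartitionOf n g) (p : ℕ) :
    IsPartitionOf (n + p) (addCol p g) := by
  obtain ⟨hanti, hz, hsum⟩ := (isPartitionOf_iff_of_le (Nat.le_add_right n p)).1 hg
  refine ⟨fun i j hij => ?_, ?_, ?_⟩
  · have := hanti hij
    unfold addCol
    split_ifs <;> omega
  · simp [addCol, hz]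
  · rw [sum_range_addCol, hsum, min_eq_right (Nat.le_add_left p n)]

theorem IsPartitionOf.isPartitionOf_eraseCol (hf : IsPartitionOf N f) :
    IsPartitionOf (N - numParts N f) (eraseCol f) := by
  refine (isPartitionOf_iff_of_le (Nat.sub_le N _)).2
    ⟨fun i j hij => Nat.sub_le_sub_right (hf.1 hij) 1, ?_, ?_⟩
  · simp [eraseCol, hf.2.1]
  · have hsum := sum_range_addCol (numParts N f) (eraseCol f) N
    rw [hf.addCol_eraseCol, hf.2.2, min_eq_right (numParts_le N f)] at hsum
    exact (Nat.sub_eq_of_eq_add hsum).symm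

theorem IsPartitionOf.numParts_addCol (hg : IsPartitionOf n g) (hp : numParts n g ≤ p) :
    numParts (n + p) (addCol p g) = p := by
  refine numParts_eq_of_ne_zero_iff (Nat.le_add_left p n) fun i => ?_
  have := hg.ne_zero_iff i
  unfold addCol
  split_ifs <;> omega

theorem IsPartitionOf.numParts_eraseCol_le (hf : IsPartitionOf N f) (n : ℕ) :
    numParts n (eraseCol f) ≤ numParts N f := by
  refine (Finset.card_le_card fun i hi => ?_).trans_eq (Finset.card_range (numParts N f))
  have hi : f i - 1 ≠ 0 := (Finset.mem_filter.1 hi).2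
  exact Finset.mem_range.2 ((hf.ne_zero_iff i).1 (by omega))

theorem IsPartitionOf.multPart_addCol_succ (hg : IsPartitionOf n g) (hp : numParts n g ≤ p)
    (hk : k ≠ 0) : multPart (n + p) (addCol p g) (k + 1) = multPart n g k := by
  unfold multPart addCol
  congr 1
  ext i
  have := hg.ne_zero_iff i
  have := numParts_le n g
  simp only [Finset.mem_filter, Finset.mem_range]
  split_ifs <;> omega

theorem IsPartitionOf.orthogonalPartition_addCol_iff (hg : IsPartitionOf n g)
    (hp : numParts n g ≤ p) :
    OrthogonalPartition (n + p) (addCol p g) ↔ SymplecticPartition n g := by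
  refine ⟨fun ⟨_, heven⟩ => ⟨hg, fun k hk => ?_⟩,
    fun ⟨_, heven⟩ => ⟨hg.isPartitionOf_addCol p, fun k hpos hk => ?_⟩⟩
  · rw [← hg.multPart_addCol_succ hp hk.pos.ne']
    exact heven (k + 1) k.succ_pos hk.add_one
  · obtain ⟨k, rfl⟩ := Nat.exists_eq_add_one.2 hpos
    have hodd : Odd k := by simpa [Nat.even_add_one] using hk
    rw [hg.multPart_addCol_succ hp hodd.pos.ne']
    exact heven k hodd

theorem OrthogonalPartition.symplecticPartition_eraseCol (hf : OrthogonalPartition N f) :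
    SymplecticPartition (N - numParts N f) (eraseCol f) := by
  refine (hf.1.isPartitionOf_eraseCol.orthogonalPartition_addCol_iff
    (hf.1.numParts_eraseCol_le _)).1 ?_
  rwa [Nat.sub_add_cancel (numParts_le N f), hf.1.addCol_eraseCol]

end

theorem stmt9_general (N n : ℕ) :
    Set.BijOn eraseCol
      {f | OrthogonalPartition N f ∧ 3 ≤ f 0 ∧ N - numParts N f = n}
      {g | SymplecticPartition n g ∧ 2 ≤ g 0 ∧ numParts n g + n ≤ N} ∧
    ∀ f ∈ {f : ℕ → ℕ | OrthogonalPartition N f ∧ 3 ≤ f 0 ∧ N - numParts N f = n},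
      ∀ g ∈ {f : ℕ → ℕ | OrthogonalPartition N f ∧ 3 ≤ f 0 ∧ N - numParts N f = n},
        (Dominates f g ↔ Dominates (eraseCol f) (eraseCol g)) := by
  refine ⟨Set.InvOn.bijOn (f' := addCol (N - n)) ⟨?_, ?_⟩ ?_ ?_, ?_⟩
  · rintro f ⟨hf, -, rfl⟩
    rw [Nat.sub_sub_self (numParts_le N f), hf.1.addCol_eraseCol]
  · rintro g ⟨hg, -, hp⟩
    exact hg.1.eraseCol_addCol (Nat.le_sub_of_add_le hp)
  · rintro f ⟨hf, hf0, rfl⟩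
    refine ⟨hf.symplecticPartition_eraseCol, Nat.le_sub_one_of_lt hf0, ?_⟩
    have := hf.1.numParts_eraseCol_le (N - numParts N f)
    have := numParts_le N f
    omega
  · rintro g ⟨hg, hg0, hp⟩
    obtain ⟨p, rfl⟩ := Nat.exists_eq_add_of_le (le_of_add_le_right hp)
    have hp : numParts n g ≤ p := by omega
    have hpos : 0 < p := ((hg.1.ne_zero_iff 0).1 (by omega)).trans_le hp
    rw [Nat.add_sub_cancel_left]
    refine ⟨(hg.1.orthogonalPartition_addCol_iff hp).2 hg, ?_, ?_⟩
    · simpa [addCol, hpos] using hg0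
    · rw [hg.1.numParts_addCol hp, Nat.add_sub_cancel]
  · rintro f ⟨hf, -, hfn⟩ g ⟨hg, -, hgn⟩
    have := numParts_le N f
    have := numParts_le N g
    exact (hf.1.dominates_eraseCol_iff hg.1 (by omega)).symm

/-- For `N ≥ 7` and `1 ≤ m` with `2m < ⌊N/2⌋`, erasing the first column is a bijection
from `A_m = {orthogonal λ ⊢ N : λ₁ ≥ 3, N − p(λ) = 2m}` onto
`{symplectic ν ⊢ 2m : ν₁ ≥ 2}`, and it preserves and reflects the dominance order. -/
theorem stmt9 (N m : ℕ) (hN : 7 ≤ N) (hm : 1 ≤ m) (hmN : 2 * m < N / 2) :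
    Set.BijOn eraseCol
      {f | OrthogonalPartition N f ∧ 3 ≤ f 0 ∧ N - numParts N f = 2 * m}
      {g | SymplecticPartition (2 * m) g ∧ 2 ≤ g 0} ∧
    ∀ f ∈ {f : ℕ → ℕ | OrthogonalPartition N f ∧ 3 ≤ f 0 ∧ N - numParts N f = 2 * m},
      ∀ g ∈ {f : ℕ → ℕ | OrthogonalPartition N f ∧ 3 ≤ f 0 ∧ N - numParts N f = 2 * m},
        (Dominates f g ↔ Dominates (eraseCol f) (eraseCol g)) := by
  have hparts (g : ℕ → ℕ) : numParts (2 * m) g + 2 * m ≤ N := by grind [numParts_le]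
  simpa only [hparts, and_true] using stmt9_general N (2 * m)
end
end

section
/- Let n ≥ 2 and let P be the set of symplectic partitions λ of 2n with p(λ) > n (equivalently 2n − p(λ) < n). Then the maximal elements of P with respect to the dominance order are exactly: (2m, 1^{2m}) if n = 2m is even, and (2m, 2, 1^{2m}) if n = 2m+1 is odd. (These are precisely the partitions of the maximal nilpotent Sp_{2n}-orbits O whose conical secant variety CS(O) is not all of sp_{2n}, i.e., whose secant variety is defective.) -/
noncomputable section

/-- The maximal elements of a set of partitions with respect to the dominance order. -/
def maximalsIn (P : Set (ℕ → ℕ)) : Set (ℕ → ℕ) :=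
  {f | f ∈ P ∧ ∀ g ∈ P, Dominates f g → f = g}

/-- The hook partition `(a, 1^b)`. -/
def hookPart (a b : ℕ) : ℕ → ℕ := fun i => if i = 0 then a else if i ≤ b then 1 else 0

/-- The partition `(a, 2, 1^b)`. -/
def hook2Part (a b : ℕ) : ℕ → ℕ := fun i =>
  if i = 0 then a else if i = 1 then 2 else if i ≤ b + 1 then 1 else 0

/-- The symplectic partitions of `2n` with more than `n` parts (the nilpotent
`Sp_{2n}`-orbits with defective secant variety). -/
def defectiveSp (n : ℕ) : Set (ℕ → ℕ) :=
  {f | SymplecticPartition (2 * n) f ∧ n < numParts (2 * n) f}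

/-!
If `λ` is a partition of `2n` with more than `n` parts, then `λ₁, …, λₙ₊₁` are all positive, so
`λ₁ + ⋯ + λₖ₊₁ ≤ 2n - (n - k) = n + k` for `k ≤ n`. These are the partial sums of `(n, 1ⁿ)`, which
therefore dominates `λ`; for even `n` it is symplectic. For odd `n`, a first part equal to `n`
would have to be repeated in a symplectic `λ`, contradicting `λ₁ + λ₂ ≤ n + 1`. So `λ₁ ≤ n - 1`,
and the first partial sum is the only one that drops in passing from `(n, 1ⁿ)` to
`(n - 1, 2, 1ⁿ⁻¹)`.
-/

section

variable {n r a b : ℕ} {f g : ℕ → ℕ}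

theorem Dominates.antisymm (hfg : Dominates f g) (hgf : Dominates g f) : f = g := by
  have hsum (m : ℕ) : ∑ i ∈ Finset.range m, f i = ∑ i ∈ Finset.range m, g i :=
    le_antisymm (hfg m) (hgf m)
  funext m
  have hsucc := hsum (m + 1)
  rwa [Finset.sum_range_succ, Finset.sum_range_succ, hsum m, Nat.add_left_cancel_iff] at hsucc

theorem maximalsIn_eq_singleton {P : Set (ℕ → ℕ)} (hg : g ∈ P) (hP : ∀ f ∈ P, Dominates f g) :
    maximalsIn P = {g} := by
  ext f
  constructor
  · rintro ⟨hf, hmax⟩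
    exact hmax g hg (hP f hf)
  · rintro rfl
    exact ⟨hg, fun h hh hfh => hfh.antisymm (hP h hh)⟩

namespace IsPartitionOf

theorem apply_eq_zero (hf : IsPartitionOf n f) {i : ℕ} (hi : n ≤ i) : f i = 0 :=
  Nat.eq_zero_of_le_zero ((hf.1 hi).trans_eq hf.2.1)

theorem sum_range_le (hf : IsPartitionOf n f) (k : ℕ) : ∑ i ∈ Finset.range k, f i ≤ n :=
  calc ∑ i ∈ Finset.range k, f i ≤ ∑ i ∈ Finset.range (max n k), f i :=
        Finset.sum_le_sum_of_subset (Finset.range_subset_range.2 (le_max_right n k))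
    _ = ∑ i ∈ Finset.range n, f i :=
        Finset.eventually_constant_sum (fun _ hi => hf.apply_eq_zero hi) (le_max_left n k)
    _ = n := hf.2.2

theorem lt_numParts_iff (hf : IsPartitionOf n f) : r < numParts n f ↔ f r ≠ 0 := by
  constructor
  · intro hr hzero
    have hsub : (Finset.range n).filter (fun i => f i ≠ 0) ⊆ Finset.range r := fun i hi =>
      Finset.mem_range.2 <| lt_of_not_ge fun hri =>
        (Finset.mem_filter.1 hi).2 (Nat.eq_zero_of_le_zero ((hf.1 hri).trans_eq hzero))
    have hcard : numParts n f ≤ r := by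
      simpa only [numParts, Finset.card_range] using Finset.card_le_card hsub
    exact hr.not_ge hcard
  · intro hr
    have hrn : r < n := lt_of_not_ge fun hnr => hr (hf.apply_eq_zero hnr)
    have hsub : Finset.range (r + 1) ⊆ (Finset.range n).filter (fun i => f i ≠ 0) := by
      intro i hi
      have hir : i ≤ r := Finset.mem_range_succ_iff.1 hi
      have := hf.1 hir
      exact Finset.mem_filter.2 ⟨Finset.mem_range.2 (hir.trans_lt hrn), by omega⟩
    simpa only [numParts, Nat.succ_le_iff, Finset.card_range] using Finset.card_le_card hsub

-- The subtraction is truncated: for `r ≤ k` this is `sum_range_le`.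
theorem sum_range_succ_add_sub_le (hf : IsPartitionOf n f) (hr : r < numParts n f) (k : ℕ) :
    ∑ i ∈ Finset.range (k + 1), f i + (r - k) ≤ n := by
  rcases le_total r k with hrk | hkr
  · simpa only [Nat.sub_eq_zero_of_le hrk, add_zero] using hf.sum_range_le (k + 1)
  · have hpos : ∀ i ∈ Finset.Ico (k + 1) (r + 1), 1 ≤ f i := fun i hi =>
      (Nat.one_le_iff_ne_zero.2 (hf.lt_numParts_iff.1 hr)).trans
        (hf.1 (Nat.lt_succ_iff.1 (Finset.mem_Ico.1 hi).2))
    have htail : r - k ≤ ∑ i ∈ Finset.Ico (k + 1) (r + 1), f i := by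
      simpa using Finset.card_nsmul_le_sum _ f 1 hpos
    calc ∑ i ∈ Finset.range (k + 1), f i + (r - k)
        ≤ ∑ i ∈ Finset.range (k + 1), f i + ∑ i ∈ Finset.Ico (k + 1) (r + 1), f i := by gcongr
      _ = ∑ i ∈ Finset.range (r + 1), f i :=
          Finset.sum_range_add_sum_Ico f (Nat.succ_le_succ hkr)
      _ ≤ n := hf.sum_range_le (r + 1)

theorem symplecticPartition_of_odd_eq_one (hf : IsPartitionOf n f) (hodd : ∀ i, Odd (f i) → f i = 1)
    (hone : Even (multPart n f 1)) : SymplecticPartition n f := by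
  refine ⟨hf, fun q hq => ?_⟩
  by_cases hq1 : q = 1
  · rwa [hq1]
  · have hempty : (Finset.range n).filter (fun i => f i = q) = ∅ :=
      Finset.filter_false_of_mem fun i _ hi => hq1 (hi ▸ hodd i (hi ▸ hq))
    rw [multPart, hempty, Finset.card_empty]
    exact Even.zero

end IsPartitionOf

theorem SymplecticPartition.apply_one_eq_apply_zero (hf : SymplecticPartition n f)
    (hodd : Odd (f 0)) : f 1 = f 0 := by
  by_contra hne
  have hlt : f 1 < f 0 := lt_of_le_of_ne (hf.1.1 zero_le_one) hne
  have hn : 0 < n := Nat.pos_of_ne_zero fun h => hodd.pos.ne' (hf.1.apply_eq_zero h.le)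
  have hsingle : (Finset.range n).filter (fun i => f i = f 0) = {0} := by
    ext i
    simp only [Finset.mem_filter, Finset.mem_range, Finset.mem_singleton]
    constructor
    · rintro ⟨-, hi⟩
      by_contra hi0
      exact ((hf.1.1 (Nat.one_le_iff_ne_zero.2 hi0)).trans_lt hlt).ne hi
    · rintro rfl
      exact ⟨hn, rfl⟩
  have heven : Even 1 := by
    simpa only [multPart, hsingle, Finset.card_singleton] using hf.2 _ hodd
  exact Nat.not_even_one heven

theorem multPart_succ (n : ℕ) (f : ℕ → ℕ) (q : ℕ) :
    multPart (n + 1) f q = multPart n (fun i => f (i + 1)) q + if f 0 = q then 1 else 0 := by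
  simp only [multPart, Finset.card_filter, Finset.sum_range_succ']

theorem hookPart_zero (a b : ℕ) : hookPart a b 0 = a := rfl

theorem hookPart_succ (a b i : ℕ) : hookPart a b (i + 1) = if i < b then 1 else 0 := by
  simp [hookPart]

theorem hook2Part_zero (a b : ℕ) : hook2Part a b 0 = a := rfl

theorem hook2Part_succ (a b i : ℕ) : hook2Part a b (i + 1) = hookPart 2 b i := by
  simp [hook2Part, hookPart]

theorem sum_range_succ_hookPart (a b k : ℕ) :
    ∑ i ∈ Finset.range (k + 1), hookPart a b i = a + min k b := by
  induction k with
  | zero => simp [hookPart_zero]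
  | succ k ih =>
    rw [Finset.sum_range_succ, ih, hookPart_succ]
    split_ifs <;> omega

theorem sum_range_add_two_hook2Part (a b k : ℕ) :
    ∑ i ∈ Finset.range (k + 2), hook2Part a b i = a + 2 + min k b := by
  simp only [Finset.sum_range_succ' _ (k + 1), hook2Part_zero, hook2Part_succ,
    sum_range_succ_hookPart]
  omega

theorem antitone_hookPart (b : ℕ) (ha : a ≠ 0) : Antitone (hookPart a b) := by
  intro i j hij
  simp only [hookPart]
  split_ifs <;> omega

theorem antitone_hook2Part (b : ℕ) (ha : 2 ≤ a) : Antitone (hook2Part a b) := by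
  refine antitone_nat_of_succ_le fun i => ?_
  cases i with
  | zero => simpa [hook2Part_zero, hook2Part_succ, hookPart_zero] using ha
  | succ i =>
    simpa only [hook2Part_succ] using antitone_hookPart b two_ne_zero (Nat.le_succ i)

theorem isPartitionOf_hookPart (b : ℕ) (ha : a ≠ 0) : IsPartitionOf (a + b) (hookPart a b) := by
  obtain ⟨a, rfl⟩ := Nat.exists_eq_succ_of_ne_zero ha
  have hsize : a.succ + b = a + b + 1 := by omega
  refine ⟨antitone_hookPart b ha, ?_, ?_⟩
  · simp [hsize, hookPart_succ]
  · rw [hsize, sum_range_succ_hookPart]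
    omega

theorem isPartitionOf_hook2Part (b : ℕ) (ha : 2 ≤ a) :
    IsPartitionOf (a + 2 + b) (hook2Part a b) := by
  have hsize : a + 2 + b = a + b + 2 := by omega
  refine ⟨antitone_hook2Part b ha, ?_, ?_⟩
  · simp [hsize, hook2Part_succ, hookPart_succ]
  · rw [hsize, sum_range_add_two_hook2Part]
    omega

theorem eq_one_of_odd_hookPart (ha : Even a) (i : ℕ) (hi : Odd (hookPart a b i)) :
    hookPart a b i = 1 := by
  cases i with
  | zero => exact absurd hi (Nat.not_odd_iff_even.2 ha)
  | succ i =>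
    rw [hookPart_succ] at hi ⊢
    split_ifs at hi ⊢
    · rfl
    · exact absurd hi Nat.not_odd_zero

theorem eq_one_of_odd_hook2Part (ha : Even a) (i : ℕ) (hi : Odd (hook2Part a b i)) :
    hook2Part a b i = 1 := by
  cases i with
  | zero => exact absurd hi (Nat.not_odd_iff_even.2 ha)
  | succ i =>
    rw [hook2Part_succ] at hi ⊢
    exact eq_one_of_odd_hookPart even_two i hi

theorem multPart_one_hookPart (ha : a ≠ 1) (hb : b < n) : multPart n (hookPart a b) 1 = b := by
  have hones : (Finset.range n).filter (fun i => hookPart a b i = 1) = Finset.Ico 1 (b + 1) := by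
    ext i
    simp only [Finset.mem_filter, Finset.mem_range, Finset.mem_Ico]
    cases i with
    | zero => simp [hookPart_zero, ha]
    | succ i =>
      simp only [hookPart_succ, ite_eq_left_iff, zero_ne_one, imp_false, not_not]
      omega
  rw [multPart, hones, Nat.card_Ico, Nat.add_sub_cancel]

theorem multPart_one_hook2Part (ha : a ≠ 1) (hb : b < n) :
    multPart (n + 1) (hook2Part a b) 1 = b := by
  simp only [multPart_succ, hook2Part_succ]
  rw [multPart_one_hookPart (by decide : 2 ≠ 1) hb, hook2Part_zero, if_neg ha, add_zero]

theorem symplecticPartition_hookPart (ha : Even a) (ha0 : a ≠ 0) (hb : Even b) :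
    SymplecticPartition (a + b) (hookPart a b) := by
  refine (isPartitionOf_hookPart b ha0).symplecticPartition_of_odd_eq_one
    (eq_one_of_odd_hookPart ha) ?_
  rwa [multPart_one_hookPart (fun h => Nat.not_even_one (h ▸ ha)) (by omega)]

theorem symplecticPartition_hook2Part (ha : Even a) (ha0 : a ≠ 0) (hb : Even b) :
    SymplecticPartition (a + 2 + b) (hook2Part a b) := by
  have ha1 : a ≠ 1 := fun h => Nat.not_even_one (h ▸ ha)
  refine (isPartitionOf_hook2Part b (by omega)).symplecticPartition_of_odd_eq_one
    (eq_one_of_odd_hook2Part ha) ?_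
  have hsize : a + 2 + b = a + b + 1 + 1 := by omega
  rwa [hsize, multPart_one_hook2Part ha1 (by omega)]

theorem IsPartitionOf.dominates_hookPart (hf : IsPartitionOf (a + b) f)
    (hb : b < numParts (a + b) f) : Dominates f (hookPart a b) := by
  rintro (_ | k)
  · simp
  · have := hf.sum_range_succ_add_sub_le hb k
    rw [sum_range_succ_hookPart]
    omega

theorem Dominates.hook2Part_of_hookPart (hf : Dominates f (hookPart (a + 1) (b + 1)))
    (h0 : f 0 ≤ a) : Dominates f (hook2Part a b) := by
  rintro (_ | _ | k)
  · simp
  · simpa [hook2Part_zero] using h0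
  · have := hf (k + 1 + 1)
    rw [sum_range_succ_hookPart] at this
    rw [sum_range_add_two_hook2Part]
    omega

theorem SymplecticPartition.dominates_hook2Part (hf : SymplecticPartition n f) (ha : Even a)
    (ha0 : a ≠ 0) (hhook : Dominates f (hookPart (a + 1) (b + 1))) :
    Dominates f (hook2Part a b) := by
  have hfst : f 0 ≤ a + 1 := by simpa [hookPart_zero] using hhook 1
  have hsnd : f 0 + f 1 ≤ a + 2 := by
    have := hhook 2
    rw [sum_range_succ_hookPart, Finset.sum_range_succ, Finset.sum_range_one] at this
    omega
  have hne : f 0 ≠ a + 1 := fun h => by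
    have := hf.apply_one_eq_apply_zero (h ▸ ha.add_one)
    omega
  exact hhook.hook2Part_of_hookPart (by omega)

theorem hookPart_mem_defectiveSp (hn : Even n) (hn0 : n ≠ 0) : hookPart n n ∈ defectiveSp n := by
  have hf : SymplecticPartition (2 * n) (hookPart n n) :=
    two_mul n ▸ symplecticPartition_hookPart hn hn0 hn
  exact ⟨hf, hf.1.lt_numParts_iff.2 (by simp [hookPart, hn0])⟩

theorem hook2Part_mem_defectiveSp (ha : Even a) (ha0 : a ≠ 0) :
    hook2Part a a ∈ defectiveSp (a + 1) := by
  have hsize : 2 * (a + 1) = a + 2 + a := by omega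
  have hf : SymplecticPartition (2 * (a + 1)) (hook2Part a a) :=
    hsize ▸ symplecticPartition_hook2Part ha ha0 ha
  exact ⟨hf, hf.1.lt_numParts_iff.2 (by simp [hook2Part, ha0])⟩

theorem dominates_hookPart_of_mem_defectiveSp (hf : f ∈ defectiveSp n) :
    Dominates f (hookPart n n) := by
  obtain ⟨⟨hpart, -⟩, hnum⟩ := hf
  rw [two_mul] at hpart hnum
  exact hpart.dominates_hookPart hnum

theorem dominates_hook2Part_of_mem_defectiveSp (ha : Even a) (ha0 : a ≠ 0)
    (hf : f ∈ defectiveSp (a + 1)) : Dominates f (hook2Part a a) :=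
  hf.1.dominates_hook2Part ha ha0 (dominates_hookPart_of_mem_defectiveSp hf)

end

/-- The maximal defective nilpotent `Sp_{2n}`-orbits: `(2m, 1^{2m})` for `n = 2m` and
`(2m, 2, 1^{2m})` for `n = 2m + 1`. -/
theorem stmt11 (n : ℕ) (hn : 2 ≤ n) :
    (∀ m : ℕ, n = 2 * m →
      maximalsIn (defectiveSp n) = {hookPart (2 * m) (2 * m)}) ∧
    (∀ m : ℕ, n = 2 * m + 1 →
      maximalsIn (defectiveSp n) = {hook2Part (2 * m) (2 * m)}) := by
  constructor
  · rintro m rfl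
    exact maximalsIn_eq_singleton (hookPart_mem_defectiveSp (even_two_mul m) (by omega))
      fun _ => dominates_hookPart_of_mem_defectiveSp
  · rintro m rfl
    have hm : 2 * m ≠ 0 := by omega
    exact maximalsIn_eq_singleton (hook2Part_mem_defectiveSp (even_two_mul m) hm)
      fun _ => dominates_hook2Part_of_mem_defectiveSp (even_two_mul m) hm
end
end
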